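/- arXiv:1309.3223 — 5 statements merged into one kernel-verified Lean document; each statement's English description precedes it below -/
import Mathlib

section
/- Let G=(V,E) be a finite weighted graph and let k ≥ 2 be such that λ_k > 0. Then there exists an integer ℓ with 1 ≤ ℓ ≤ k−1 and a partition of V into nonempty sets P_1,…,P_ℓ such that for every 1 ≤ i ≤ ℓ: φ(G[P_i]) ≥ ρ(k)/(40k²) ≥ λ_k/(80k²), and φ_G(P_i) ≤ ℓ·ρ(ℓ). -/
open Finset

/-- Weighted degree of a vertex. -/
noncomputable def deg {V : Type*} [Fintype V] (w : V → V → ℝ) (v : V) : ℝ :=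
  ∑ u, w v u

/-- Volume of a set of vertices. -/
noncomputable def vol {V : Type*} [Fintype V] (w : V → V → ℝ) (S : Finset V) : ℝ :=
  ∑ v ∈ S, deg w v

/-- Total weight of edges from `S` to `T \ S`. -/
noncomputable def eW {V : Type*} [DecidableEq V] (w : V → V → ℝ) (S T : Finset V) : ℝ :=
  ∑ u ∈ S, ∑ v ∈ T \ S, w u v

/-- Conductance of `S` in `G`. -/
noncomputable def phi {V : Type*} [Fintype V] [DecidableEq V] (w : V → V → ℝ)
    (S : Finset V) : ℝ :=
  eW w S Finset.univ / vol w S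

/-- Volume of `S ⊆ P` inside the induced subgraph `G[P]`. -/
noncomputable def volIn {V : Type*} [DecidableEq V] (w : V → V → ℝ) (P S : Finset V) : ℝ :=
  ∑ v ∈ S, ∑ u ∈ P, w v u

/-- `φ(G[P]) ≥ a` : every nonempty proper `S ⊊ P` with at most half of the induced volume
has induced conductance at least `a` (stated multiplicatively). -/
def inCondGE {V : Type*} [DecidableEq V] (w : V → V → ℝ) (P : Finset V) (a : ℝ) : Prop :=
  ∀ S : Finset V, S ⊆ P → S.Nonempty → S ≠ P →
    volIn w P S ≤ volIn w P P / 2 → a * volIn w P S ≤ eW w S P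

/-- `ρ(k)`: the minimum over families of `k` pairwise disjoint nonempty subsets of the
maximum conductance. -/
noncomputable def rho {V : Type*} [Fintype V] [DecidableEq V] (w : V → V → ℝ) (k : ℕ) : ℝ :=
  sInf { r | ∃ A : Fin k → Finset V, (∀ i, (A i).Nonempty) ∧
    (∀ i j, i ≠ j → Disjoint (A i) (A j)) ∧ r = ⨆ i, phi w (A i) }

/-- The normalized Laplacian `I - D^{-1/2} A D^{-1/2}`. -/
noncomputable def normLap {V : Type*} [Fintype V] [DecidableEq V] (w : V → V → ℝ) : Matrix V V ℝ :=
  1 - Matrix.of fun u v => w u v / (Real.sqrt (deg w u) * Real.sqrt (deg w v))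

/-- `lam w k` is the `k`-th smallest eigenvalue (1-indexed) of the normalized Laplacian. -/
noncomputable def lam {V : Type*} [Fintype V] [DecidableEq V] (w : V → V → ℝ) (k : ℕ) : ℝ :=
  if h : (normLap w).IsHermitian then
    ((Finset.univ.val.map h.eigenvalues).sort (· ≤ ·)).getD (k - 1) 0
  else 0


set_option linter.unusedSectionVars false

section
variable {V : Type*} [Fintype V] [DecidableEq V]

/-- total weight between `A` and `B` -/
noncomputable def XX (w : V → V → ℝ) (A B : Finset V) : ℝ := ∑ u ∈ A, ∑ v ∈ B, w u v

theorem XX_symm (w : V → V → ℝ) (hsym : ∀ u v, w u v = w v u) (A B : Finset V) :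
    XX w A B = XX w B A := by
  unfold XX
  rw [Finset.sum_comm]
  exact Finset.sum_congr rfl fun u _ => Finset.sum_congr rfl fun v _ => hsym _ _

theorem XX_nonneg (w : V → V → ℝ) (hnn : ∀ u v, 0 ≤ w u v) (A B : Finset V) :
    0 ≤ XX w A B := Finset.sum_nonneg fun _ _ => Finset.sum_nonneg fun _ _ => hnn _ _

theorem XX_left (w : V → V → ℝ) {A C D : Finset V} (B : Finset V) (h : A = C ∪ D)
    (hd : Disjoint C D) : XX w A B = XX w C B + XX w D B := by
  unfold XX
  rw [h, Finset.sum_union hd]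

theorem XX_right (w : V → V → ℝ) {A C D : Finset V} (B : Finset V) (h : A = C ∪ D)
    (hd : Disjoint C D) : XX w B A = XX w B C + XX w B D := by
  unfold XX
  rw [h, ← Finset.sum_add_distrib]
  exact Finset.sum_congr rfl fun u _ => Finset.sum_union hd

theorem XX_mono_right (w : V → V → ℝ) (hnn : ∀ u v, 0 ≤ w u v) (B : Finset V) {C D : Finset V}
    (h : C ⊆ D) : XX w B C ≤ XX w B D :=
  Finset.sum_le_sum fun _ _ => Finset.sum_le_sum_of_subset_of_nonneg h fun _ _ _ => hnn _ _

theorem vol_eq_XX (w : V → V → ℝ) (A : Finset V) : vol w A = XX w A univ := rfl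

theorem eW_eq_XX (w : V → V → ℝ) (A B : Finset V) : eW w A B = XX w A (B \ A) := rfl

theorem volIn_eq_XX (w : V → V → ℝ) (P A : Finset V) : volIn w P A = XX w A P := rfl

theorem vol_pos' (w : V → V → ℝ) (hdeg : ∀ v, 0 < deg w v) {A : Finset V} (h : A.Nonempty) :
    0 < vol w A := Finset.sum_pos (fun v _ => hdeg v) h

/-- The key inequality. -/
theorem core (w : V → V → ℝ) (hsym : ∀ u v, w u v = w v u) (hnn : ∀ u v, 0 ≤ w u v)
    (hdeg : ∀ v, 0 < deg w v) (P B S T : Finset V) (l r r' t : ℝ) (hl : 1 ≤ l) (ht : 0 < t)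
    (hr0 : 0 ≤ r) (hr : r ≤ l * t) (hr' : (l + 1) * t ≤ r')
    (hBP : B ⊆ P) (hP : P = S ∪ T) (hST : Disjoint S T) (hB : B.Nonempty)
    (h1 : ∀ C D : Finset V, C.Nonempty → D.Nonempty → Disjoint C D → B = C ∪ D →
      r' * vol w C ≤ XX w C Cᶜ ∨ r' * vol w D ≤ XX w D Dᶜ)
    (h2 : ∀ C : Finset V, C.Nonempty → C ⊆ B → C ≠ B → r * vol w C ≤ XX w C Cᶜ)
    (h3 : ∀ Q : Finset V, Q.Nonempty → Q ⊆ P \ B → r' * vol w Q ≤ XX w Q Qᶜ)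
    (h4 : ∀ Z : Finset V, Z ⊆ P \ B → XX w Z Zᶜ ≤ l * XX w Z (P \ Z))
    (h5 : XX w B Bᶜ ≤ r * vol w B)
    (hv : vol w (S ∩ B) ≤ vol w (T ∩ B)) :
    t * vol w S ≤ (2 * l + 2) * XX w S T := by
  have d : ∀ x, x ∈ B → x ∈ S ∨ x ∈ T := by
    intro x hx; have := hBP hx; rw [hP] at this; simpa using this
  have d2 : ∀ x, x ∈ S → x ∉ T := fun x hx hx' => Finset.disjoint_left.1 hST hx hx'
  have hBu : B = (S ∩ B) ∪ (T ∩ B) := by ext x; have := d x; simp; tauto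
  have hBd : Disjoint (S ∩ B) (T ∩ B) := by
    rw [Finset.disjoint_left]; intro x; have := d2 x; simp; tauto
  have hSu : S = (S ∩ B) ∪ (S \ B) := by ext x; simp; tauto
  have hSd : Disjoint (S ∩ B) (S \ B) := by
    rw [Finset.disjoint_left]; intro x; simp; tauto
  have vB : vol w B = vol w (S ∩ B) + vol w (T ∩ B) := XX_left w univ hBu hBd
  have vS : vol w S = vol w (S ∩ B) + vol w (S \ B) := XX_left w univ hSu hSd
  have eB : XX w B Bᶜ = XX w (S ∩ B) Bᶜ + XX w (T ∩ B) Bᶜ := XX_left w _ hBu hBd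
  have eSB : XX w (S ∩ B) (S ∩ B)ᶜ = XX w (S ∩ B) Bᶜ + XX w (S ∩ B) (T ∩ B) := by
    apply XX_right
    · ext x; have := d x; have := d2 x; simp; tauto
    · rw [Finset.disjoint_left]; intro x; simp; tauto
  have eTB : XX w (T ∩ B) (T ∩ B)ᶜ = XX w (T ∩ B) Bᶜ + XX w (T ∩ B) (S ∩ B) := by
    apply XX_right
    · ext x; have := d x; have := d2 x; simp; tauto
    · rw [Finset.disjoint_left]; intro x; simp; tauto
  have sy1 := XX_symm w hsym (T ∩ B) (S ∩ B)
  have eST : XX w S T = XX w (S ∩ B) T + XX w (S \ B) T := XX_left w _ hSu hSd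
  have m1 : XX w (S ∩ B) (T ∩ B) ≤ XX w (S ∩ B) T :=
    XX_mono_right w hnn _ Finset.inter_subset_left
  have n1 := XX_nonneg w hnn (S \ B) T
  have eP : XX w (S \ B) (P \ (S \ B)) = XX w (S \ B) (S ∩ B) + XX w (S \ B) T := by
    apply XX_right
    · ext x; have := d x; have := d2 x; rw [hP]; simp; tauto
    · rw [Finset.disjoint_left]; intro x; have := d2 x; simp; tauto
  have m2 : XX w (S \ B) (S ∩ B) ≤ XX w (S ∩ B) Bᶜ := by
    rw [XX_symm w hsym]
    apply XX_mono_right w hnn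
    intro x; simp
  have f4 := h4 (S \ B) (by
    intro x; rw [hP]; simp; tauto)
  have f3 : r' * vol w (S \ B) ≤ XX w (S \ B) (S \ B)ᶜ := by
    rcases (S \ B).eq_empty_or_nonempty with h | h
    · rw [h]; simp [vol, XX]
    · exact h3 _ h (by intro x; rw [hP]; simp; tauto)
  have a0 : 0 ≤ vol w (S ∩ B) := XX_nonneg w hnn _ _
  have b0 : 0 ≤ vol w (S \ B) := XX_nonneg w hnn _ _
  have key : t * vol w (S ∩ B) ≤ 2 * XX w (S ∩ B) (T ∩ B) ∧
      XX w (S ∩ B) Bᶜ ≤ XX w (S ∩ B) (T ∩ B) + r * vol w (S ∩ B) := by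
    rcases (S ∩ B).eq_empty_or_nonempty with h | h
    · rw [h]; simp [vol, XX]
    · have hp := vol_pos' w hdeg h
      have hT : (T ∩ B).Nonempty := by
        rcases (T ∩ B).eq_empty_or_nonempty with h' | h'
        · rw [h'] at hv; simp [vol] at hv; unfold vol at hp; linarith
        · exact h'
      have c1 := h2 _ h Finset.inter_subset_right (by
        intro hh; obtain ⟨x, hx⟩ := hT
        have h3 : x ∈ S ∩ B := by rw [hh]; exact (Finset.mem_inter.1 hx).2
        exact Finset.disjoint_left.1 hBd h3 hx)
      have c2 := h2 _ hT Finset.inter_subset_right (by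
        intro hh; obtain ⟨x, hx⟩ := h
        have h3 : x ∈ T ∩ B := by rw [hh]; exact (Finset.mem_inter.1 hx).2
        exact Finset.disjoint_left.1 hBd hx h3)
      have htr : t ≤ r' - r := by nlinarith
      constructor
      · rcases h1 _ _ h hT hBd hBu with g | g
        · nlinarith
        · nlinarith [mul_le_mul_of_nonneg_left hv (by linarith : 0 ≤ r' - r),
            mul_le_mul_of_nonneg_right htr a0]
      · nlinarith
  obtain ⟨k1, k2⟩ := key
  rw [vS]
  set e := XX w S T
  have q1 : t * vol w (S ∩ B) ≤ 2 * e := by linarith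
  have q2 : r' * vol w (S \ B) ≤ l * (e + r * vol w (S ∩ B)) := by
    refine f3.trans (f4.trans ?_)
    apply mul_le_mul_of_nonneg_left _ (by linarith)
    linarith
  have q3 : (l + 1) * (t * vol w (S \ B)) ≤ l * (e + l * (2 * e)) := by
    have u1 := mul_le_mul_of_nonneg_right hr' b0
    have u2 := mul_le_mul_of_nonneg_right hr a0
    have u3 : l * (t * vol w (S ∩ B)) ≤ l * (2 * e) := mul_le_mul_of_nonneg_left q1 (by linarith)
    have u4 : l * (e + r * vol w (S ∩ B)) ≤ l * (e + l * (2 * e)) :=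
      mul_le_mul_of_nonneg_left (by linarith) (by linarith)
    linarith
  have e0 : 0 ≤ e := XX_nonneg w hnn _ _
  have q4 : t * vol w (S \ B) ≤ 2 * l * e := by
    have : (l + 1) * (t * vol w (S \ B)) ≤ (l + 1) * (2 * l * e) := by nlinarith
    exact le_of_mul_le_mul_left this (by linarith)
  linarith

/-- Existence of a minimum cut partition extending the `B i`. -/
theorem exists_part (w : V → V → ℝ) (hsym : ∀ u v, w u v = w v u)
    (l : ℕ) (hl : 1 ≤ l) (B : Fin l → Finset V)
    (hBd : ∀ i j, i ≠ j → Disjoint (B i) (B j)) :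
    ∃ f : V → Fin l, (∀ i, B i ⊆ univ.filter (fun v => f v = i)) ∧
      ∀ i j Z, j ≠ i → Z ⊆ univ.filter (fun v => f v = i) \ B i →
        XX w Z (univ.filter (fun v => f v = j)) ≤ XX w Z (univ.filter (fun v => f v = i) \ Z) := by
  classical
  let F : Finset (V → Fin l) := univ.filter (fun f => ∀ i, ∀ v ∈ B i, f v = i)
  let cut : (V → Fin l) → ℝ := fun f => ∑ u, ∑ v, w u v * (if f u = f v then 0 else 1)
  have hF : F.Nonempty := by
    refine ⟨fun v => if h : ∃ i, v ∈ B i then h.choose else ⟨0, hl⟩, ?_⟩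
    simp only [F, Finset.mem_filter, Finset.mem_univ, true_and]
    intro i v hv
    have h : ∃ i, v ∈ B i := ⟨i, hv⟩
    rw [dif_pos h]
    by_contra hne
    exact Finset.disjoint_left.1 (hBd _ _ hne) h.choose_spec hv
  obtain ⟨f, hf, hmin⟩ := Finset.exists_min_image F cut hF
  have hf' : ∀ i, ∀ v ∈ B i, f v = i := by simpa [F] using hf
  refine ⟨f, fun i v hv => by simpa using hf' i v hv, ?_⟩
  intro i j Z hji hZ
  have hZ1 : ∀ v ∈ Z, f v = i ∧ v ∉ B i := fun v hv => by simpa using hZ hv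
  let g : V → Fin l := fun v => if v ∈ Z then j else f v
  have hg : g ∈ F := by
    simp only [F, Finset.mem_filter, Finset.mem_univ, true_and]
    intro i' v hv
    have h1 := hf' i' v hv
    have : v ∉ Z := by
      intro hvZ
      have := hZ1 v hvZ
      rw [h1] at this
      rw [this.1] at hv
      exact this.2 hv
    simp [g, this, h1]
  have hm := hmin g hg
  have hX : ∀ A C : Finset V, XX w A C = ∑ u, ∑ v, w u v * (if u ∈ A ∧ v ∈ C then 1 else 0) := by
    intro A C
    unfold XX
    rw [← Finset.sum_filter_add_sum_filter_not univ (fun u => u ∈ A)]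
    rw [Finset.sum_eq_zero (s := univ.filter (fun u => ¬ u ∈ A))]
    · simp only [Finset.filter_mem_eq_inter, Finset.univ_inter, add_zero]
      refine Finset.sum_congr rfl fun u hu => ?_
      simp [hu]
    · intro u hu
      have : u ∉ A := by simpa using hu
      simp [this]
  have key : cut g - cut f = XX w Z (univ.filter (fun v => f v = i) \ Z)
      + XX w (univ.filter (fun v => f v = i) \ Z) Z
      - XX w Z (univ.filter (fun v => f v = j)) - XX w (univ.filter (fun v => f v = j)) Z := by
    simp only [hX, cut]
    simp only [← Finset.sum_add_distrib, ← Finset.sum_sub_distrib]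
    refine Finset.sum_congr rfl fun u _ => Finset.sum_congr rfl fun v _ => ?_
    simp only [← mul_add, ← mul_sub]
    congr 1
    have hu := hZ1 u
    have hv := hZ1 v
    by_cases huZ : u ∈ Z <;> by_cases hvZ : v ∈ Z
    · simp [g, huZ, hvZ, (hu huZ).1, (hv hvZ).1, hji.symm]
    · have := (hu huZ).1
      by_cases a : f v = i
      · simp [g, huZ, hvZ, this, a, hji, hji.symm]
      · by_cases b : f v = j
        · simp [g, huZ, hvZ, this, b, hji, hji.symm]
        · simp [g, huZ, hvZ, this, a, b, Ne.symm a, Ne.symm b]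
    · have := (hv hvZ).1
      by_cases a : f u = i
      · simp [g, huZ, hvZ, this, a, hji, hji.symm]
      · by_cases b : f u = j
        · simp [g, huZ, hvZ, this, b, hji, hji.symm]
        · simp [g, huZ, hvZ, this, a, b]
    · simp [g, huZ, hvZ]
  rw [XX_symm w hsym (_ \ Z) Z, XX_symm w hsym (univ.filter _) Z] at key
  linarith

end

section
variable {V : Type*} [Fintype V] [DecidableEq V]

theorem phi_eq (w : V → V → ℝ) (S : Finset V) : phi w S = XX w S Sᶜ / vol w S := rfl

theorem le_phi_iff (w : V → V → ℝ) (hdeg : ∀ v, 0 < deg w v) {S : Finset V} (h : S.Nonempty)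
    (r : ℝ) : r ≤ phi w S ↔ r * vol w S ≤ XX w S Sᶜ := by
  rw [phi_eq, le_div_iff₀ (vol_pos' w hdeg h)]

theorem phi_le_iff (w : V → V → ℝ) (hdeg : ∀ v, 0 < deg w v) {S : Finset V} (h : S.Nonempty)
    (r : ℝ) : phi w S ≤ r ↔ XX w S Sᶜ ≤ r * vol w S := by
  rw [phi_eq, div_le_iff₀ (vol_pos' w hdeg h)]

theorem phi_nonneg (w : V → V → ℝ) (hnn : ∀ u v, 0 ≤ w u v) (S : Finset V) : 0 ≤ phi w S :=
  div_nonneg (XX_nonneg w hnn _ _) (XX_nonneg w hnn _ _)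

theorem rho_set_finite (w : V → V → ℝ) (m : ℕ) : { r | ∃ A : Fin m → Finset V,
    (∀ i, (A i).Nonempty) ∧
    (∀ i j, i ≠ j → Disjoint (A i) (A j)) ∧ r = ⨆ i, phi w (A i) }.Finite := by
  refine (Set.finite_range (fun A : Fin m → Finset V => ⨆ i, phi w (A i))).subset ?_
  rintro r ⟨A, _, _, rfl⟩
  exact ⟨A, rfl⟩

theorem rho_le (w : V → V → ℝ) (m : ℕ) (hm : 1 ≤ m) (A : Fin m → Finset V)
    (h1 : ∀ i, (A i).Nonempty) (h2 : ∀ i j, i ≠ j → Disjoint (A i) (A j)) :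
    ∃ i, rho w m ≤ phi w (A i) := by
  haveI : Nonempty (Fin m) := ⟨⟨0, hm⟩⟩
  obtain ⟨i, hi⟩ := exists_eq_ciSup_of_finite (f := fun i => phi w (A i))
  refine ⟨i, ?_⟩
  rw [hi]
  exact csInf_le (rho_set_finite w m).bddBelow ⟨A, h1, h2, rfl⟩

theorem rho_att (w : V → V → ℝ) (m : ℕ) (hm : m ≤ Fintype.card V) :
    ∃ A : Fin m → Finset V, (∀ i, (A i).Nonempty) ∧ (∀ i j, i ≠ j → Disjoint (A i) (A j)) ∧
      ∀ i, phi w (A i) ≤ rho w m := by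
  have hne : { r | ∃ A : Fin m → Finset V, (∀ i, (A i).Nonempty) ∧
    (∀ i j, i ≠ j → Disjoint (A i) (A j)) ∧ r = ⨆ i, phi w (A i) }.Nonempty := by
    obtain ⟨e⟩ := Function.Embedding.nonempty_of_card_le (α := Fin m) (β := V) (by simpa using hm)
    refine ⟨_, fun i => {e i}, fun i => Finset.singleton_nonempty _, fun i j hij => ?_, rfl⟩
    simpa using hij
  obtain ⟨A, h1, h2, h3⟩ := hne.csInf_mem (rho_set_finite w m)
  refine ⟨A, h1, h2, fun i => ?_⟩
  have h3' : rho w m = ⨆ i, phi w (A i) := h3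
  rw [h3']
  exact le_ciSup (f := fun i => phi w (A i)) (Set.finite_range _).bddAbove i

theorem rho_nonneg (w : V → V → ℝ) (hnn : ∀ u v, 0 ≤ w u v) (m : ℕ) : 0 ≤ rho w m := by
  apply Real.sInf_nonneg
  rintro r ⟨A, _, _, rfl⟩
  exact Real.iSup_nonneg fun i => phi_nonneg w hnn _

theorem rho_one (w : V → V → ℝ) (hnn : ∀ u v, 0 ≤ w u v) [Nonempty V] : rho w 1 = 0 := by
  apply le_antisymm _ (rho_nonneg w hnn 1)
  obtain ⟨i, hi⟩ := rho_le w 1 le_rfl (fun _ => univ) (fun _ => Finset.univ_nonempty)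
    (fun i j hij => absurd (Subsingleton.elim i j) hij)
  refine hi.trans (le_of_eq ?_)
  simp [phi_eq, XX]

theorem main_part (w : V → V → ℝ)
    (hsym : ∀ u v, w u v = w v u) (hnn : ∀ u v, 0 ≤ w u v)
    (hdeg : ∀ v, 0 < deg w v) (l : ℕ) (hl : 1 ≤ l) (hlc : l + 1 ≤ Fintype.card V) (t : ℝ)
    (ht : 0 < t) (hr : rho w l ≤ l * t) (hr' : ((l : ℝ) + 1) * t ≤ rho w (l + 1)) :
    ∃ P : Fin l → Finset V,
      (∀ i, (P i).Nonempty) ∧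
      (∀ i j, i ≠ j → Disjoint (P i) (P j)) ∧
      (∀ v : V, ∃ i, v ∈ P i) ∧
      (∀ i, (∀ S ⊆ P i, volIn w (P i) S ≤ volIn w (P i) (P i) / 2 →
          t * volIn w (P i) S ≤ (2 * l + 2) * eW w S (P i)) ∧
        phi w (P i) ≤ (l : ℝ) * rho w l) := by
  classical
  have hl1 : (1 : ℝ) ≤ l := by exact_mod_cast hl
  have hlt : rho w l < rho w (l + 1) := by nlinarith
  let F : Finset (Fin l → Finset V) := univ.filter fun A => (∀ i, (A i).Nonempty) ∧
    (∀ i j, i ≠ j → Disjoint (A i) (A j)) ∧ ∀ i, phi w (A i) ≤ rho w l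
  have hF : F.Nonempty := by
    obtain ⟨A, hA⟩ := rho_att w l (by omega)
    exact ⟨A, by simpa [F] using hA⟩
  obtain ⟨B, hBF, hmin⟩ := Finset.exists_min_image F (fun A => ∑ i, (A i).card) hF
  obtain ⟨hBn, hBd, hBr⟩ : (∀ i, (B i).Nonempty) ∧
    (∀ i j, i ≠ j → Disjoint (B i) (B j)) ∧ ∀ i, phi w (B i) ≤ rho w l := by
    simpa only [F, Finset.mem_filter, Finset.mem_univ, true_and] using hBF
  obtain ⟨f, hfB, hfm⟩ := exists_part w hsym l hl B hBd
  set P : Fin l → Finset V := fun i => univ.filter (fun v => f v = i) with hPdef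
  have hPd : ∀ i j, i ≠ j → Disjoint (P i) (P j) := by
    intro i j hij
    rw [Finset.disjoint_left]
    intro x hx hx'
    simp only [P, Finset.mem_filter, Finset.mem_univ, true_and] at hx hx'
    exact hij (hx.symm.trans hx')
  have hupd : ∀ i (C : Finset V), C ⊆ B i → ∀ a b, a ≠ b →
      Disjoint (Function.update B i C a) (Function.update B i C b) := by
    intro i C hC a b hab
    have hs : ∀ c, Function.update B i C c ⊆ B c := by
      intro c
      by_cases h : c = i
      · subst h; simpa using hC
      · simp [h]
    exact Disjoint.mono (hs a) (hs b) (hBd a b hab)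
  have H2 : ∀ i, ∀ C : Finset V, C.Nonempty → C ⊆ B i → C ≠ B i →
      rho w l * vol w C ≤ XX w C Cᶜ := by
    intro i C hC hCB hne
    rw [← le_phi_iff w hdeg hC]
    by_contra hlt'
    push Not at hlt'
    have hmem : Function.update B i C ∈ F := by
      simp only [F, Finset.mem_filter, Finset.mem_univ, true_and]
      refine ⟨fun a => ?_, hupd i C hCB, fun a => ?_⟩
      · by_cases h : a = i
        · subst h; simpa using hC
        · simpa [h] using hBn a
      · by_cases h : a = i
        · subst h; simpa using hlt'.le
        · simpa [h] using hBr a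
    have h1 := hmin _ hmem
    have h2 : ∑ a, (Function.update B i C a).card < ∑ a, (B a).card := by
      apply Finset.sum_lt_sum
      · intro a _
        by_cases h : a = i
        · subst h; simpa using Finset.card_le_card hCB
        · simp [h]
      · refine ⟨i, Finset.mem_univ _, ?_⟩
        simpa using Finset.card_lt_card (hCB.ssubset_of_ne hne)
    omega
  have H1 : ∀ i, ∀ C D : Finset V, C.Nonempty → D.Nonempty → Disjoint C D → B i = C ∪ D →
      rho w (l + 1) * vol w C ≤ XX w C Cᶜ ∨ rho w (l + 1) * vol w D ≤ XX w D Dᶜ := by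
    intro i C D hC hD hCD hB
    have hCB : C ⊆ B i := by rw [hB]; exact Finset.subset_union_left
    have hDB : D ⊆ B i := by rw [hB]; exact Finset.subset_union_right
    rw [← le_phi_iff w hdeg hC, ← le_phi_iff w hdeg hD]
    have hdis : ∀ a, Disjoint C (Function.update B i D a) := by
      intro a
      by_cases h : a = i
      · subst h; simpa using hCD
      · simpa [h] using Disjoint.mono_left hCB (hBd i a (Ne.symm h))
    obtain ⟨a, ha⟩ := rho_le w (l + 1) (by omega) (Fin.cons C (Function.update B i D)) (by
        intro a
        refine Fin.cases ?_ (fun a => ?_) a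
        · simpa using hC
        · by_cases h : a = i
          · subst h; simpa using hD
          · simpa [h] using hBn a) (by
        intro a b
        refine Fin.cases ?_ (fun a => ?_) a <;> refine Fin.cases ?_ (fun b => ?_) b
        · intro h; exact absurd rfl h
        · intro _; simpa using hdis b
        · intro _; simpa using (hdis a).symm
        · intro h; simpa using hupd i D hDB a b (fun hh => h (by rw [hh])))
    revert ha
    refine Fin.cases ?_ (fun a => ?_) a
    · intro ha; left; simpa using ha
    · by_cases h : a = i
      · subst h; intro ha; right; simpa using ha
      · intro ha
        have := hBr a
        simp [h] at ha
        linarith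
  have hBP : ∀ i, B i ⊆ P i := hfB
  have H3 : ∀ i, ∀ Q : Finset V, Q.Nonempty → Q ⊆ P i \ B i →
      rho w (l + 1) * vol w Q ≤ XX w Q Qᶜ := by
    intro i Q hQ hQP
    rw [← le_phi_iff w hdeg hQ]
    have hdis : ∀ a, Disjoint Q (B a) := by
      intro a
      by_cases h : a = i
      · subst h
        exact Disjoint.mono_left hQP Finset.sdiff_disjoint
      · exact Disjoint.mono (hQP.trans Finset.sdiff_subset) (hBP a) (hPd i a (Ne.symm h))
    obtain ⟨a, ha⟩ := rho_le w (l + 1) (by omega) (Fin.cons Q B) (by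
        intro a
        refine Fin.cases ?_ (fun a => ?_) a
        · simpa using hQ
        · simpa using hBn a) (by
        intro a b
        refine Fin.cases ?_ (fun a => ?_) a <;> refine Fin.cases ?_ (fun b => ?_) b
        · intro h; exact absurd rfl h
        · intro _; simpa using hdis b
        · intro _; simpa using (hdis a).symm
        · intro h; simpa using hBd a b (fun hh => h (by rw [hh])))
    revert ha
    refine Fin.cases ?_ (fun a => ?_) a
    · intro ha; simpa using ha
    · intro ha
      have := hBr a
      simp at ha
      linarith
  have H4 : ∀ i, ∀ Z : Finset V, Z ⊆ P i \ B i → XX w Z Zᶜ ≤ l * XX w Z (P i \ Z) := by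
    intro i Z hZ
    have hZP : Z ⊆ P i := hZ.trans Finset.sdiff_subset
    have e1 : XX w Z Zᶜ = XX w Z (P i \ Z) + XX w Z (P i)ᶜ := by
      apply XX_right
      · ext x; have := @hZP x; simp only [Finset.mem_compl, Finset.mem_union, Finset.mem_sdiff]; tauto
      · rw [Finset.disjoint_left]; intro x
        simp only [Finset.mem_compl, Finset.mem_sdiff]; tauto
    have e2 : XX w Z (P i)ᶜ = ∑ j ∈ univ.erase i, XX w Z (P j) := by
      have : (P i)ᶜ = (univ.erase i).biUnion P := by
        ext x; simp [P]
      unfold XX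
      rw [this]
      conv_rhs => rw [Finset.sum_comm]
      refine Finset.sum_congr rfl fun u _ => ?_
      apply Finset.sum_biUnion
      intro a _ b _ hab
      exact hPd a b hab
    have e3 : ∑ j ∈ univ.erase i, XX w Z (P j) ≤ (univ.erase i).card • XX w Z (P i \ Z) :=
      Finset.sum_le_card_nsmul _ _ _ fun j hj => hfm i j Z (Finset.ne_of_mem_erase hj) hZ
    rw [Finset.card_erase_of_mem (Finset.mem_univ _), Finset.card_univ, Fintype.card_fin,
      nsmul_eq_mul, Nat.cast_sub hl] at e3
    push_cast at e3
    linarith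
  have H5 : ∀ i, XX w (B i) (B i)ᶜ ≤ rho w l * vol w (B i) := fun i =>
    (phi_le_iff w hdeg (hBn i) _).1 (hBr i)
  have hr0 := rho_nonneg w hnn l
  have hPn : ∀ i, (P i).Nonempty := fun i => (hBn i).mono (hBP i)
  refine ⟨P, hPn, hPd, fun v => ⟨f v, by simp [P]⟩, fun i => ⟨?_, ?_⟩⟩
  · intro S hS hvS
    have hPu : P i = S ∪ (P i \ S) := (Finset.union_sdiff_of_subset hS).symm
    have hSd : Disjoint S (P i \ S) := Finset.disjoint_sdiff
    rw [eW_eq_XX]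
    rw [volIn_eq_XX] at *
    rw [volIn_eq_XX] at *
    have hvol : ∀ A, XX w A (P i) ≤ vol w A := fun A =>
      XX_mono_right w hnn A (Finset.subset_univ _)
    have hadd : XX w (P i) (P i) = XX w S (P i) + XX w (P i \ S) (P i) := XX_left w _ hPu hSd
    rcases le_total (vol w (S ∩ B i)) (vol w ((P i \ S) ∩ B i)) with h | h
    · have := core w hsym hnn hdeg (P i) (B i) S (P i \ S) l (rho w l) (rho w (l + 1)) t hl1 ht hr0
        hr hr' (hBP i) hPu hSd (hBn i) (H1 i) (H2 i) (H3 i) (H4 i) (H5 i) h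
      exact (mul_le_mul_of_nonneg_left (hvol S) ht.le).trans this
    · have := core w hsym hnn hdeg (P i) (B i) (P i \ S) S l (rho w l) (rho w (l + 1)) t hl1 ht hr0
        hr hr' (hBP i) (by rw [Finset.union_comm]; exact hPu) hSd.symm (hBn i)
        (H1 i) (H2 i) (H3 i) (H4 i) (H5 i) h
      rw [XX_symm w hsym (P i \ S) S] at this
      refine le_trans (mul_le_mul_of_nonneg_left ?_ ht.le) this
      have := hvol (P i \ S)
      linarith
  · rw [phi_le_iff w hdeg (hPn i)]
    have hs := hBP i
    have hs' : ∀ x, x ∈ B i → x ∈ P i := fun x hx => hs hx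
    have z := H4 i (P i \ B i) subset_rfl
    have e0 : P i \ (P i \ B i) = B i := by
      ext x; have := hs' x; simp only [Finset.mem_sdiff]; tauto
    rw [e0] at z
    have e1 : XX w (P i \ B i) (P i \ B i)ᶜ = XX w (P i \ B i) (P i)ᶜ + XX w (P i \ B i) (B i) := by
      apply XX_right
      · ext x; have := hs' x
        simp only [Finset.mem_compl, Finset.mem_union, Finset.mem_sdiff]; tauto
      · rw [Finset.disjoint_left]; intro x; have := hs' x
        simp only [Finset.mem_compl]; tauto
    have e2 : XX w (B i) (B i)ᶜ = XX w (B i) (P i)ᶜ + XX w (B i) (P i \ B i) := by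
      apply XX_right
      · ext x; have := hs' x
        simp only [Finset.mem_compl, Finset.mem_union, Finset.mem_sdiff]; tauto
      · rw [Finset.disjoint_left]; intro x
        simp only [Finset.mem_compl, Finset.mem_sdiff]; tauto
    have hPu : P i = B i ∪ (P i \ B i) := (Finset.union_sdiff_of_subset hs).symm
    have e3 : XX w (P i) (P i)ᶜ = XX w (B i) (P i)ᶜ + XX w (P i \ B i) (P i)ᶜ :=
      XX_left w _ hPu Finset.disjoint_sdiff
    have e4 : vol w (P i) = vol w (B i) + vol w (P i \ B i) :=
      XX_left w _ hPu Finset.disjoint_sdiff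
    have n1 := XX_nonneg w hnn (B i) (P i)ᶜ
    have n2 : 0 ≤ vol w (P i \ B i) := XX_nonneg w hnn _ _
    have n3 := XX_nonneg w hnn (B i) (P i \ B i)
    rw [XX_symm w hsym (P i \ B i) (B i)] at *
    have g1 : XX w (P i) (P i)ᶜ ≤ l * XX w (B i) (B i)ᶜ := by
      rw [e2]; nlinarith
    have g2 : (l : ℝ) * XX w (B i) (B i)ᶜ ≤ l * (rho w l * vol w (B i)) :=
      mul_le_mul_of_nonneg_left (H5 i) (by linarith)
    have g3 : (l : ℝ) * (rho w l * vol w (B i)) ≤ l * (rho w l * vol w (P i)) :=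
      mul_le_mul_of_nonneg_left (mul_le_mul_of_nonneg_left (by linarith) hr0) (by linarith)
    linarith
end

section
variable {V : Type*} [Fintype V] [DecidableEq V]

theorem normLap_herm (w : V → V → ℝ) (hsym : ∀ u v, w u v = w v u) : (normLap w).IsHermitian := by
  rw [Matrix.isHermitian_iff_isSymm]
  ext u v
  simp only [normLap, Matrix.transpose_apply, Matrix.sub_apply, Matrix.of_apply, Matrix.one_apply]
  rw [hsym v u, mul_comm (√(deg w v))]
  by_cases h : u = v
  · rw [if_pos h, if_pos h.symm]
  · rw [if_neg h, if_neg (Ne.symm h)]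

/-- few eigenvalues below the k-th one -/
theorem sort_count {ι : Type*} [Fintype ι] (g : ι → ℝ) (k : ℕ) (hk : 1 ≤ k)
    (hkc : k ≤ Fintype.card ι) (x : ℝ)
    (hx : x = ((Finset.univ.val.map g).sort (· ≤ ·)).getD (k - 1) 0) :
    Fintype.card {i // g i < x} < k := by
  classical
  set L := (Finset.univ.val.map g).sort (· ≤ ·) with hL
  have hlen : L.length = Fintype.card ι := by simp [hL]
  have hs : L.Pairwise (· ≤ ·) := Multiset.pairwise_sort _ _
  have hcoe : (L : Multiset ℝ) = Finset.univ.val.map g := Multiset.sort_eq _ _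
  have hcard : Fintype.card {i // g i < x} = (L.countP (fun y => decide (y < x))) := by
    rw [Fintype.card_subtype, ← Multiset.coe_countP, hcoe, Multiset.countP_map]
    rfl
  rw [hcard]
  have hlt : k - 1 < L.length := by omega
  have hx' : x = L[k - 1] := by rw [hx, List.getD_eq_getElem _ _ hlt]
  rw [← List.take_append_drop (k - 1) L, List.countP_append]
  have h2 : (L.drop (k - 1)).countP (fun y => decide (y < x)) = 0 := by
    rw [List.countP_eq_zero]
    intro y hy
    simp only [decide_eq_true_eq, not_lt]
    obtain ⟨n, hn, rfl⟩ := List.mem_iff_getElem.1 hy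
    rw [List.getElem_drop, hx']
    rcases Nat.eq_zero_or_pos n with h | h
    · subst h; simp
    · exact (List.pairwise_iff_getElem.1 hs) (k - 1) (k - 1 + n) _ _ (by omega)
  rw [h2]
  have h1 := List.countP_le_length (p := fun y => decide (y < x)) (l := L.take (k - 1))
  have h3 : (L.take (k - 1)).length ≤ k - 1 := by simp
  omega

theorem quad_ge {n : Type*} [Fintype n] [DecidableEq n] (M : Matrix n n ℝ) (hM : M.IsHermitian)
    (x : EuclideanSpace ℝ n) (a : ℝ)
    (hx : ∀ i, hM.eigenvalues i < a → inner ℝ (hM.eigenvectorBasis i) x = 0) :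
    a * (x.ofLp ⬝ᵥ x.ofLp) ≤ x.ofLp ⬝ᵥ (M.mulVec x.ofLp) := by
  have e1 : x.ofLp ⬝ᵥ x.ofLp = ∑ i, inner ℝ (hM.eigenvectorBasis i) x ^ 2 := by
    have h := hM.eigenvectorBasis.sum_inner_mul_inner x x
    rw [EuclideanSpace.inner_eq_star_dotProduct] at h
    simp only [star_trivial] at h
    rw [← h]
    refine Finset.sum_congr rfl fun i _ => ?_
    rw [real_inner_comm, sq]
  have e2 : x.ofLp ⬝ᵥ (M.mulVec x.ofLp)
      = ∑ i, hM.eigenvalues i * inner ℝ (hM.eigenvectorBasis i) x ^ 2 := by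
    have h := hM.eigenvectorBasis.sum_inner_mul_inner x (WithLp.toLp 2 (M.mulVec x.ofLp))
    rw [EuclideanSpace.inner_eq_star_dotProduct] at h
    simp only [star_trivial] at h
    rw [dotProduct_comm, ← h]
    refine Finset.sum_congr rfl fun i _ => ?_
    have : inner ℝ (hM.eigenvectorBasis i) (WithLp.toLp 2 (M.mulVec x.ofLp))
        = hM.eigenvalues i * inner ℝ (hM.eigenvectorBasis i) x := by
      rw [EuclideanSpace.inner_eq_star_dotProduct, EuclideanSpace.inner_eq_star_dotProduct]
      simp only [star_trivial]
      rw [dotProduct_comm, Matrix.dotProduct_mulVec, ← Matrix.mulVec_transpose,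
        (Matrix.isHermitian_iff_isSymm.1 hM).eq, hM.mulVec_eigenvectorBasis, smul_dotProduct,
        dotProduct_comm]
      rfl
    rw [this, real_inner_comm]
    ring
  rw [e1, e2, Finset.mul_sum]
  refine Finset.sum_le_sum fun i _ => ?_
  by_cases h : hM.eigenvalues i < a
  · rw [hx i h]; simp
  · exact mul_le_mul_of_nonneg_right (not_lt.1 h) (sq_nonneg _)

/-- Quadratic form of the normalized Laplacian. -/
theorem quad_normLap (w : V → V → ℝ) (hsym : ∀ u v, w u v = w v u) (hdeg : ∀ v, 0 < deg w v)
    (f : V → ℝ) :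
    (fun v => √(deg w v) * f v) ⬝ᵥ (normLap w).mulVec (fun v => √(deg w v) * f v)
      = (∑ u, ∑ v, w u v * (f u - f v) ^ 2) / 2 := by
  have hs : ∀ v, √(deg w v) ≠ 0 := fun v => (Real.sqrt_pos.2 (hdeg v)).ne'
  have hsq : ∀ v, √(deg w v) * √(deg w v) = deg w v := fun v => Real.mul_self_sqrt (hdeg v).le
  have e1 : (fun v => √(deg w v) * f v) ⬝ᵥ (normLap w).mulVec (fun v => √(deg w v) * f v)
      = ∑ u, deg w u * f u ^ 2 - ∑ u, ∑ v, w u v * (f u * f v) := by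
    rw [normLap, Matrix.sub_mulVec, Matrix.one_mulVec, dotProduct_sub]
    congr 1
    · refine Finset.sum_congr rfl fun u _ => ?_
      rw [← hsq u]; ring
    · refine Finset.sum_congr rfl fun u _ => ?_
      simp only [Matrix.mulVec, dotProduct, Matrix.of_apply, Finset.mul_sum]
      refine Finset.sum_congr rfl fun v _ => ?_
      have := hs u; have := hs v
      field_simp
  have e2 : ∑ u, ∑ v, w u v * (f u - f v) ^ 2 = ∑ u, ∑ v, w u v * f u ^ 2
      + ∑ u, ∑ v, w u v * f v ^ 2 - 2 * ∑ u, ∑ v, w u v * (f u * f v) := by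
    simp only [Finset.mul_sum, ← Finset.sum_add_distrib, ← Finset.sum_sub_distrib]
    refine Finset.sum_congr rfl fun u _ => Finset.sum_congr rfl fun v _ => ?_
    ring
  have e3 : ∑ u, ∑ v, w u v * f u ^ 2 = ∑ u, deg w u * f u ^ 2 :=
    Finset.sum_congr rfl fun u _ => by rw [deg, Finset.sum_mul]
  have e4 : ∑ u, ∑ v, w u v * f v ^ 2 = ∑ u, deg w u * f u ^ 2 := by
    rw [Finset.sum_comm, ← e3]
    exact Finset.sum_congr rfl fun u _ => Finset.sum_congr rfl fun v _ => by rw [hsym]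
  rw [e1, e2, e3, e4]
  ring

theorem lam_le (w : V → V → ℝ) (hsym : ∀ u v, w u v = w v u) (hnn : ∀ u v, 0 ≤ w u v)
    (hdeg : ∀ v, 0 < deg w v) (k : ℕ) (hk : 1 ≤ k) (hkc : k ≤ Fintype.card V) :
    lam w k ≤ 2 * rho w k := by
  classical
  obtain ⟨A, hAn, hAd, hAr⟩ := rho_att w k hkc
  set r := rho w k
  have hM := normLap_herm w hsym
  have hlam : lam w k = ((Finset.univ.val.map hM.eigenvalues).sort (· ≤ ·)).getD (k - 1) 0 := by
    rw [lam, dif_pos hM]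
  have hcount := sort_count hM.eigenvalues k hk hkc (lam w k) hlam
  let F : (Fin k → ℝ) → V → ℝ := fun c v => ∑ i, if v ∈ A i then c i else 0
  let T : (Fin k → ℝ) →ₗ[ℝ] EuclideanSpace ℝ V :=
    { toFun := fun c => WithLp.toLp 2 (fun v => √(deg w v) * F c v)
      map_add' := by
        intro a b; ext v
        simp only [F, PiLp.add_apply, Pi.add_apply]
        rw [← mul_add, ← Finset.sum_add_distrib]
        congr 1
        exact Finset.sum_congr rfl fun i _ => by split_ifs <;> simp
      map_smul' := by
        intro a b; ext v
        simp only [F, PiLp.smul_apply, Pi.smul_apply, RingHom.id_apply, smul_eq_mul]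
        rw [mul_left_comm, Finset.mul_sum (a := a)]
        congr 1
        exact Finset.sum_congr rfl fun i _ => by split_ifs <;> simp }
  let Φ : (Fin k → ℝ) →ₗ[ℝ] ({i // hM.eigenvalues i < lam w k} → ℝ) :=
    LinearMap.pi fun i => (innerₛₗ ℝ (hM.eigenvectorBasis i.1)).comp T
  have hker : LinearMap.ker Φ ≠ ⊥ := by
    apply LinearMap.ker_ne_bot_of_finrank_lt
    simpa using hcount
  obtain ⟨c, hc, hc0⟩ := Submodule.exists_mem_ne_zero_of_ne_bot hker
  have hFA : ∀ i, ∀ v ∈ A i, F c v = c i := by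
    intro i v hv
    simp only [F]
    rw [Finset.sum_eq_single i]
    · simp [hv]
    · intro j _ hji
      rw [if_neg]
      intro hvj
      exact Finset.disjoint_left.1 (hAd j i hji) hvj hv
    · simp
  have hF0 : ∀ v, (∀ i, v ∉ A i) → F c v = 0 := by
    intro v hv
    simp [F, hv]
  have hq := quad_ge (normLap w) hM (T c) (lam w k) (by
    intro i hi
    have := congrFun (LinearMap.mem_ker.1 hc) ⟨i, hi⟩
    simpa [Φ] using this)
  have hTc : (T c).ofLp = fun v => √(deg w v) * F c v := rfl
  rw [hTc, quad_normLap w hsym hdeg] at hq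
  have hnorm : (fun v => √(deg w v) * F c v) ⬝ᵥ (fun v => √(deg w v) * F c v)
      = ∑ v, deg w v * F c v ^ 2 := by
    refine Finset.sum_congr rfl fun v _ => ?_
    have := Real.mul_self_sqrt (hdeg v).le
    linear_combination (F c v) ^ 2 * this
  rw [hnorm] at hq
  have hpos : 0 < ∑ v, deg w v * F c v ^ 2 := by
    obtain ⟨i, hi⟩ : ∃ i, c i ≠ 0 := by
      by_contra h; push Not at h; exact hc0 (funext h)
    obtain ⟨v, hv⟩ := hAn i
    refine Finset.sum_pos' (fun v _ => mul_nonneg (hdeg v).le (sq_nonneg _))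
      ⟨v, Finset.mem_univ _, mul_pos (hdeg v) ?_⟩
    rw [hFA i v hv]
    positivity
  have hsplit : ∀ g : V → ℝ, ∑ v, g v * F c v ^ 2 = ∑ i, c i ^ 2 * ∑ v ∈ A i, g v := by
    intro g
    have h1 : ∀ v, g v * F c v ^ 2 = ∑ i, if v ∈ A i then c i ^ 2 * g v else 0 := by
      intro v
      by_cases h : ∃ i, v ∈ A i
      · obtain ⟨i, hi⟩ := h
        rw [hFA i v hi, Finset.sum_eq_single i]
        · simp [hi, mul_comm]
        · intro j _ hji
          rw [if_neg]
          intro hvj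
          exact Finset.disjoint_left.1 (hAd j i hji) hvj hi
        · simp
      · push Not at h
        simp [hF0 v h, h]
    simp only [h1]
    rw [Finset.sum_comm]
    refine Finset.sum_congr rfl fun i _ => ?_
    rw [Finset.mul_sum, ← Finset.sum_filter]
    congr 1
    ext; simp
  let X : V → V → ℝ := fun u v => if ∃ i, u ∈ A i ∧ v ∈ A i then 0 else w u v
  have hXsym : ∀ u v, X u v = X v u := by
    intro u v
    simp only [X, hsym u v, and_comm]
  have hX0 : ∀ u v, 0 ≤ X u v := by
    intro u v; simp only [X]; split_ifs
    · exact le_rfl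
    · exact hnn _ _
  have hb : ∑ u, ∑ v, w u v * (F c u - F c v) ^ 2 ≤
      ∑ u, ∑ v, (2 * (X u v * F c u ^ 2) + 2 * (X u v * F c v ^ 2)) := by
    refine Finset.sum_le_sum fun u _ => Finset.sum_le_sum fun v _ => ?_
    by_cases h : ∃ i, u ∈ A i ∧ v ∈ A i
    · obtain ⟨i, h1, h2⟩ := h
      rw [hFA i u h1, hFA i v h2]
      have := hX0 u v
      have : 0 ≤ X u v * c i ^ 2 := by positivity
      nlinarith
    · have : X u v = w u v := by simp only [X, if_neg h]
      rw [this]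
      nlinarith [mul_nonneg (hnn u v) (sq_nonneg (F c u + F c v))]
  have hb2 : ∑ u, ∑ v, (2 * (X u v * F c u ^ 2) + 2 * (X u v * F c v ^ 2))
      = 4 * ∑ u, (∑ v, X u v) * F c u ^ 2 := by
    have s1 : ∑ u, ∑ v, X u v * F c v ^ 2 = ∑ u, ∑ v, X u v * F c u ^ 2 := by
      rw [Finset.sum_comm]
      exact Finset.sum_congr rfl fun u _ => Finset.sum_congr rfl fun v _ => by rw [hXsym]
    simp only [Finset.sum_add_distrib, ← Finset.mul_sum, s1, Finset.sum_mul]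
    ring
  have hb3 : ∑ u, (∑ v, X u v) * F c u ^ 2 ≤ r * ∑ v, deg w v * F c v ^ 2 := by
    rw [hsplit, hsplit, Finset.mul_sum]
    refine Finset.sum_le_sum fun i _ => ?_
    have h1 : ∑ u ∈ A i, ∑ v, X u v ≤ XX w (A i) (A i)ᶜ := by
      refine Finset.sum_le_sum fun u hu => ?_
      rw [← Finset.sum_add_sum_compl (A i), Finset.sum_eq_zero (s := A i), zero_add]
      · refine Finset.sum_le_sum fun v _ => ?_
        simp only [X]; split_ifs
        · exact hnn _ _
        · exact le_rfl
      · intro v hv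
        simp only [X]
        rw [if_pos ⟨i, hu, hv⟩]
    have h2 := (phi_le_iff w hdeg (hAn i) r).1 (hAr i)
    have h3 := mul_le_mul_of_nonneg_left (h1.trans h2) (sq_nonneg (c i))
    refine h3.trans (le_of_eq ?_)
    unfold vol
    ring
  have : lam w k * ∑ v, deg w v * F c v ^ 2 ≤ (2 * r) * ∑ v, deg w v * F c v ^ 2 := by
    linarith
  exact le_of_mul_le_mul_right this hpos

theorem le_card_of_lam (w : V → V → ℝ) (k : ℕ) (hk : 1 ≤ k) (h : 0 < lam w k) :
    k ≤ Fintype.card V := by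
  by_contra hc
  have : lam w k = 0 := by
    rw [lam]
    split_ifs with hM
    · apply List.getD_eq_default
      simp; omega
    · rfl
  linarith

end

theorem stmt0 {V : Type*} [Fintype V] [DecidableEq V] (w : V → V → ℝ)
    (hsym : ∀ u v, w u v = w v u) (hnonneg : ∀ u v, 0 ≤ w u v)
    (hdeg : ∀ v, 0 < deg w v) (k : ℕ) (hk : 2 ≤ k) (hlam : 0 < lam w k) :
    lam w k / (80 * (k : ℝ) ^ 2) ≤ rho w k / (40 * (k : ℝ) ^ 2) ∧
    ∃ (ℓ : ℕ) (P : Fin ℓ → Finset V), 1 ≤ ℓ ∧ ℓ ≤ k - 1 ∧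
      (∀ i, (P i).Nonempty) ∧
      (∀ i j, i ≠ j → Disjoint (P i) (P j)) ∧
      (∀ v : V, ∃ i, v ∈ P i) ∧
      (∀ i, inCondGE w (P i) (rho w k / (40 * (k : ℝ) ^ 2)) ∧
        phi w (P i) ≤ (ℓ : ℝ) * rho w ℓ) := by
  have hkc := le_card_of_lam w k (by omega) hlam
  have hl2 := lam_le w hsym hnonneg hdeg k (by omega) hkc
  have hk0 : (0 : ℝ) < k := by exact_mod_cast (by omega : 0 < k)
  have hrk : 0 < rho w k := by linarith
  refine ⟨?_, ?_⟩
  · rw [div_le_div_iff₀ (by positivity) (by positivity)]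
    have : (0 : ℝ) ≤ (k : ℝ) ^ 2 := by positivity
    nlinarith
  haveI : Nonempty V := Fintype.card_pos_iff.1 (by omega)
  set t := rho w k / k with ht
  have htpos : 0 < t := div_pos hrk hk0
  have hex : ∃ m : ℕ, 1 ≤ m ∧ m * t ≤ rho w m :=
    ⟨k, by omega, le_of_eq (by rw [ht]; field_simp)⟩
  classical
  obtain ⟨hm1, hm2⟩ := Nat.find_spec hex
  have hmk : Nat.find hex ≤ k :=
    Nat.find_min' hex ⟨by omega, le_of_eq (by rw [ht]; field_simp)⟩
  have hmin : ∀ j, j < Nat.find hex → ¬ (1 ≤ j ∧ j * t ≤ rho w j) := fun j hj => Nat.find_min hex hj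
  generalize Nat.find hex = m at *
  have hm1' : m ≠ 1 := by
    rintro rfl
    rw [rho_one w hnonneg] at hm2
    push_cast at hm2
    linarith
  obtain ⟨l, rfl⟩ : ∃ l, m = l + 1 := ⟨m - 1, by omega⟩
  have hl : 1 ≤ l := by omega
  have hr : rho w l ≤ l * t := by
    have := hmin l (by omega)
    push Not at this
    exact (this hl).le
  push_cast at hm2
  obtain ⟨P, h1, h2, h3, h4⟩ := main_part w hsym hnonneg hdeg l hl (by omega) t htpos hr hm2
  refine ⟨l, P, hl, by omega, h1, h2, h3, fun i => ⟨?_, (h4 i).2⟩⟩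
  intro S hS _ _ hv
  have h := (h4 i).1 S hS hv
  have he : 0 ≤ eW w S (P i) := XX_nonneg w hnonneg _ _
  have hlk : (l : ℝ) + 1 ≤ k := by exact_mod_cast hmk
  have hA : rho w k / (40 * (k : ℝ) ^ 2) * volIn w (P i) S = (t * volIn w (P i) S) / (40 * k) := by
    rw [ht]; field_simp
  rw [hA, div_le_iff₀ (by positivity)]
  nlinarith
end

section
/- Let G=(V,E) be a finite weighted graph, k ≥ 1 an integer with k+1 ≤ |V|, and 0 < ε < 1. If ρ(k+1) > (1+ε)·ρ(k), then there exist k pairwise disjoint nonempty subsets A_1,…,A_k of V such that for every 1 ≤ i ≤ k: φ(G[A_i]) ≥ ε·ρ(k+1)/7 and φ_G(A_i) ≤ ρ(k). -/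
open Finset

theorem aux_min_family {V : Type*} [Fintype V] [DecidableEq V] (w : V → V → ℝ)
    (k : ℕ) (hk : 1 ≤ k) (hcard : k ≤ Fintype.card V) :
    ∃ A : Fin k → Finset V, (∀ i, (A i).Nonempty) ∧
      (∀ i j, i ≠ j → Disjoint (A i) (A j)) ∧ (∀ i, phi w (A i) ≤ rho w k) := by
  have hfin : { r | ∃ A : Fin k → Finset V, (∀ i, (A i).Nonempty) ∧
      (∀ i j, i ≠ j → Disjoint (A i) (A j)) ∧ r = ⨆ i, phi w (A i) }.Finite := by
    apply (Set.finite_range (fun A : Fin k → Finset V => ⨆ i, phi w (A i))).subset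
    rintro r ⟨A, -, -, rfl⟩
    exact ⟨A, rfl⟩
  have hne : { r | ∃ A : Fin k → Finset V, (∀ i, (A i).Nonempty) ∧
      (∀ i j, i ≠ j → Disjoint (A i) (A j)) ∧ r = ⨆ i, phi w (A i) }.Nonempty := by
    obtain ⟨f⟩ : Nonempty (Fin k ↪ V) :=
      Function.Embedding.nonempty_of_card_le (by simpa using hcard)
    refine ⟨_, fun i => {f i}, by simp, ?_, rfl⟩
    intro i j hij
    simpa using hij
  obtain ⟨A, h1, h2, h3⟩ := hne.csInf_mem hfin
  refine ⟨A, h1, h2, fun i => ?_⟩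
  unfold rho
  rw [h3]
  exact le_ciSup (f := fun i => phi w (A i)) (Set.finite_range _).bddAbove i

theorem aux_exists_ge {V : Type*} [Fintype V] [DecidableEq V] (w : V → V → ℝ)
    (k : ℕ) (A : Fin (k + 1) → Finset V) (h1 : ∀ i, (A i).Nonempty)
    (h2 : ∀ i j, i ≠ j → Disjoint (A i) (A j)) : ∃ i, rho w (k + 1) ≤ phi w (A i) := by
  have hfin : { r | ∃ A : Fin (k + 1) → Finset V, (∀ i, (A i).Nonempty) ∧
      (∀ i j, i ≠ j → Disjoint (A i) (A j)) ∧ r = ⨆ i, phi w (A i) }.Finite := by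
    apply (Set.finite_range (fun A : Fin (k + 1) → Finset V => ⨆ i, phi w (A i))).subset
    rintro r ⟨A, -, -, rfl⟩
    exact ⟨A, rfl⟩
  obtain ⟨i, hi⟩ := exists_eq_ciSup_of_finite (f := fun i => phi w (A i))
  refine ⟨i, ?_⟩
  have : rho w (k + 1) ≤ ⨆ i, phi w (A i) := csInf_le hfin.bddBelow ⟨A, h1, h2, rfl⟩
  rw [← hi] at this
  exact this

theorem stmt1 {V : Type*} [Fintype V] [DecidableEq V] (w : V → V → ℝ)
    (hsym : ∀ u v, w u v = w v u) (hnonneg : ∀ u v, 0 ≤ w u v)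
    (hdeg : ∀ v, 0 < deg w v) (k : ℕ) (hk : 1 ≤ k)
    (hcard : k + 1 ≤ Fintype.card V)
    (ε : ℝ) (hε0 : 0 < ε) (hε1 : ε < 1)
    (hgap : (1 + ε) * rho w k < rho w (k + 1)) :
    ∃ A : Fin k → Finset V, (∀ i, (A i).Nonempty) ∧
      (∀ i j, i ≠ j → Disjoint (A i) (A j)) ∧
      (∀ i, inCondGE w (A i) (ε * rho w (k + 1) / 7) ∧
        phi w (A i) ≤ rho w k) := by
  classical
  obtain ⟨A0, hA0⟩ := aux_min_family w k hk (by omega)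
  obtain ⟨A, hA, hmin⟩ := Finset.exists_min_image
    (Finset.univ.filter fun A : Fin k → Finset V => (∀ i, (A i).Nonempty) ∧
      (∀ i j, i ≠ j → Disjoint (A i) (A j)) ∧ (∀ i, phi w (A i) ≤ rho w k))
    (fun A => ∑ i, (A i).card) ⟨A0, by simpa using hA0⟩
  obtain ⟨h1, h2, h3⟩ := (Finset.mem_filter.1 hA).2
  have hvol : ∀ S : Finset V, S.Nonempty → 0 < vol w S := fun S hS =>
    Finset.sum_pos (fun v _ => hdeg v) hS
  have hF : ∀ S T : Finset V, 0 ≤ ∑ u ∈ S, ∑ v ∈ T, w u v := fun S T =>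
    Finset.sum_nonneg fun u _ => Finset.sum_nonneg fun v _ => hnonneg u v
  have hphi0 : ∀ S, 0 ≤ phi w S := fun S =>
    div_nonneg (hF _ _) (Finset.sum_nonneg fun v _ => (hdeg v).le)
  have hr0 : 0 ≤ rho w k := (hphi0 _).trans (h3 ⟨0, hk⟩)
  have hrr : rho w k < rho w (k + 1) := by nlinarith
  -- disjointness of updated families
  have hupd : ∀ i (S : Finset V), S ⊆ A i → ∀ j l, j ≠ l →
      Disjoint (Function.update A i S j) (Function.update A i S l) := by
    intro i S hS j l hjl
    have hs : ∀ j, Function.update A i S j ⊆ A j := by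
      intro j
      by_cases hj : j = i
      · subst hj; simpa using hS
      · simp [hj]
    exact (h2 j l hjl).mono (hs j) (hs l)
  -- minimality
  have hmin' : ∀ i (S : Finset V), S ⊆ A i → S.Nonempty → S ≠ A i → rho w k < phi w S := by
    intro i S hS hne hneq
    by_contra! hcon
    have hmem : Function.update A i S ∈ (Finset.univ.filter fun A : Fin k → Finset V =>
        (∀ i, (A i).Nonempty) ∧ (∀ i j, i ≠ j → Disjoint (A i) (A j)) ∧
        (∀ i, phi w (A i) ≤ rho w k)) := by
      refine Finset.mem_filter.2 ⟨Finset.mem_univ _, ?_, hupd i S hS, ?_⟩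
      · intro j
        by_cases hj : j = i
        · subst hj; simpa using hne
        · simpa [hj] using h1 j
      · intro j
        by_cases hj : j = i
        · subst hj; simpa using hcon
        · simpa [hj] using h3 j
    have hle := hmin _ hmem
    have hlt : ∑ j, (Function.update A i S j).card < ∑ j, (A j).card := by
      apply Finset.sum_lt_sum
      · intro j _
        by_cases hj : j = i
        · subst hj; simpa using Finset.card_le_card hS
        · simp [hj]
      · exact ⟨i, Finset.mem_univ _, by
          simpa using Finset.card_lt_card (hS.ssubset_of_ne hneq)⟩
    exact absurd hle (not_le.2 hlt)
  refine ⟨A, h1, h2, fun i => ⟨?_, h3 i⟩⟩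
  intro S hSP hSne hSneq hhalf
  obtain ⟨P, hP⟩ : ∃ P, P = A i := ⟨_, rfl⟩
  obtain ⟨T, hT⟩ : ∃ T, T = A i \ S := ⟨_, rfl⟩
  have hTP : T ⊆ A i := hT ▸ Finset.sdiff_subset
  have hTne : T.Nonempty := by
    rw [hT, Finset.sdiff_nonempty]
    exact fun h => hSneq (hSP.antisymm h)
  have hST : Disjoint S T := hT ▸ Finset.disjoint_sdiff
  have hTneq : T ≠ A i := by
    rintro h
    obtain ⟨x, hx⟩ := hSne
    exact Finset.disjoint_left.1 hST hx (h ▸ hSP hx)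
  have hU : S ∪ T = A i := by rw [hT]; exact Finset.union_sdiff_of_subset hSP
  have hpS := hmin' i S hSP hSne hSneq
  have hpT := hmin' i T hTP hTne hTneq
  have hbig : rho w (k + 1) ≤ phi w S ∨ rho w (k + 1) ≤ phi w T := by
    have hSd : ∀ j, Disjoint S (Function.update A i T j) := by
      intro j
      by_cases hj : j = i
      · subst hj; simpa using hST
      · simpa [hj] using (h2 i j (Ne.symm hj)).mono_left hSP
    obtain ⟨j, hj⟩ := aux_exists_ge w k (Fin.cons S (Function.update A i T)) (by
      intro j
      refine Fin.cases ?_ (fun j => ?_) j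
      · simpa using hSne
      · by_cases hj : j = i
        · subst hj; simpa using hTne
        · simpa [hj] using h1 j) (by
      intro j l
      refine Fin.cases ?_ (fun j => ?_) j <;> refine Fin.cases ?_ (fun l => ?_) l
      · simp
      · intro _; simpa using hSd l
      · intro _; simpa using (hSd j).symm
      · intro h
        simpa using hupd i T hTP j l (fun h' => h (by rw [h'])))
    revert hj
    refine Fin.cases ?_ (fun j => ?_) j
    · intro h; left; simpa using h
    · intro h
      by_cases hj : j = i
      · subst hj; right; simpa using h
      · exfalso
        have := h3 j
        simp [hj] at h
        linarith
  -- edge identities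
  obtain ⟨R, hR⟩ : ∃ R, R = Finset.univ \ A i := ⟨_, rfl⟩
  have dTR : Disjoint T R := by
    rw [hR]; exact Finset.disjoint_sdiff.mono_left hTP
  have dSR : Disjoint S R := by
    rw [hR]; exact Finset.disjoint_sdiff.mono_left hSP
  have uS : Finset.univ \ S = T ∪ R := by
    ext x; rw [hT, hR]; simp; have := @hSP x; tauto
  have uT : Finset.univ \ T = S ∪ R := by
    ext x; rw [hT, hR]; simp; have := @hSP x; tauto
  have eS : eW w S Finset.univ = ∑ u ∈ S, ∑ v ∈ T, w u v + ∑ u ∈ S, ∑ v ∈ R, w u v := by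
    unfold eW
    rw [uS, ← Finset.sum_add_distrib]
    exact Finset.sum_congr rfl fun u _ => Finset.sum_union dTR
  have eT : eW w T Finset.univ = ∑ u ∈ S, ∑ v ∈ T, w u v + ∑ u ∈ T, ∑ v ∈ R, w u v := by
    have : ∑ u ∈ S, ∑ v ∈ T, w u v = ∑ u ∈ T, ∑ v ∈ S, w u v := by
      rw [Finset.sum_comm]
      exact Finset.sum_congr rfl fun u _ => Finset.sum_congr rfl fun v _ => hsym _ _
    unfold eW
    rw [uT, this, ← Finset.sum_add_distrib]
    exact Finset.sum_congr rfl fun u _ => Finset.sum_union dSR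
  have eP : eW w (A i) Finset.univ
      = ∑ u ∈ S, ∑ v ∈ R, w u v + ∑ u ∈ T, ∑ v ∈ R, w u v := by
    unfold eW
    rw [← hR, ← hU, Finset.sum_union hST]
  have vP : vol w (A i) = vol w S + vol w T := by
    unfold vol
    rw [← hU, Finset.sum_union hST]
  have eSP : eW w S (A i) = ∑ u ∈ S, ∑ v ∈ T, w u v := by
    unfold eW; rw [hT]
  have vIn : ∀ Q : Finset V, volIn w (A i) Q ≤ vol w Q := fun Q =>
    Finset.sum_le_sum fun u _ => Finset.sum_le_sum_of_subset_of_nonneg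
      (Finset.subset_univ _) fun v _ _ => hnonneg u v
  have vInP : volIn w (A i) (A i) = volIn w (A i) S + volIn w (A i) T := by
    have : ∀ Q : Finset V, volIn w (A i) Q = ∑ v ∈ Q, ∑ u ∈ A i, w v u := fun Q => rfl
    rw [this S, this T, ← Finset.sum_union hST, hU, this]
  have hPb := h3 i
  have hvS := hvol S hSne
  have hvT := hvol T hTne
  unfold phi at hpS hpT hbig hPb
  rw [div_le_iff₀ (hvol _ (h1 i)), eP, vP] at hPb
  rw [lt_div_iff₀ hvS, eS] at hpS
  rw [lt_div_iff₀ hvT, eT] at hpT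
  rw [le_div_iff₀ hvS, le_div_iff₀ hvT, eS, eT] at hbig
  rw [eSP]
  have hS1 := vIn S
  have hT1 := vIn T
  have hS0 : 0 ≤ volIn w (A i) S := hF _ _
  rw [vInP] at hhalf
  generalize (∑ u ∈ S, ∑ v ∈ T, w u v) = x at *
  generalize (∑ u ∈ S, ∑ v ∈ R, w u v) = a at *
  generalize (∑ u ∈ T, ∑ v ∈ R, w u v) = b at *
  generalize vol w S = s at *
  generalize vol w T = t at *
  generalize volIn w (A i) S = s' at *
  generalize volIn w (A i) T = t' at *
  generalize rho w k = r at *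
  generalize rho w (k + 1) = r' at *
  have hkey : ε * r' / 2 ≤ r' - r := by nlinarith
  have hy : ∃ y, s' ≤ y ∧ (r' - r) * y ≤ 2 * x := by
    rcases hbig with h | h
    · exact ⟨s, hS1, by linarith⟩
    · exact ⟨t, by linarith, by linarith⟩
  obtain ⟨y, hy1, hy2⟩ := hy
  have hr' : 0 ≤ ε * r' := mul_nonneg hε0.le (hr0.trans hrr.le)
  have e1 : ε * r' / 2 * s' ≤ (r' - r) * y :=
    mul_le_mul hkey hy1 hS0 (by linarith)
  have e2 : 0 ≤ ε * r' * s' := mul_nonneg hr' hS0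
  linarith
end

section
/- Let G=(V,E) be a finite weighted graph, 0 < ε ≤ 1, B ⊆ V, and S a nonempty proper subset of B with T = B∖S. If e(S,B)·vol(B) ≤ (ε/3)·vol(T)·e(S,V∖B) and max{φ(S), φ(T)} ≥ (1+ε)·φ(B), then min{φ(S), φ(T)} ≤ φ(B). -/
open Finset

theorem stmt6 {V : Type*} [Fintype V] [DecidableEq V] (w : V → V → ℝ)
    (hsym : ∀ u v, w u v = w v u) (hnonneg : ∀ u v, 0 ≤ w u v)
    (hdeg : ∀ v, 0 < deg w v)
    (ε : ℝ) (hε0 : 0 < ε) (hε1 : ε ≤ 1)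
    (B S : Finset V) (hSB : S ⊆ B) (hSne : S.Nonempty) (hSpr : S ≠ B)
    (h1 : eW w S B * vol w B ≤ ε / 3 * vol w (B \ S) * eW w S (Finset.univ \ B))
    (h2 : (1 + ε) * phi w B ≤ max (phi w S) (phi w (B \ S))) :
    min (phi w S) (phi w (B \ S)) ≤ phi w B := by
  have hTne : (B \ S).Nonempty := by
    rw [Finset.sdiff_nonempty]
    exact fun h => hSpr (Finset.Subset.antisymm hSB h)
  have hs : 0 < vol w S := Finset.sum_pos (fun v _ => hdeg v) hSne
  have ht : 0 < vol w (B \ S) := Finset.sum_pos (fun v _ => hdeg v) hTne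
  have hvB : vol w B = vol w S + vol w (B \ S) := by
    unfold vol
    rw [add_comm, Finset.sum_sdiff hSB]
  obtain ⟨a, ha⟩ : ∃ a, a = ∑ u ∈ S, ∑ v ∈ univ \ B, w u v := ⟨_, rfl⟩
  obtain ⟨b, hb⟩ : ∃ b, b = ∑ u ∈ B \ S, ∑ v ∈ univ \ B, w u v := ⟨_, rfl⟩
  obtain ⟨c, hc⟩ : ∃ c, c = ∑ u ∈ S, ∑ v ∈ B \ S, w u v := ⟨_, rfl⟩
  have ha0 : 0 ≤ a := ha ▸ Finset.sum_nonneg fun u _ => Finset.sum_nonneg fun v _ => hnonneg u v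
  have hb0 : 0 ≤ b := hb ▸ Finset.sum_nonneg fun u _ => Finset.sum_nonneg fun v _ => hnonneg u v
  have hc0 : 0 ≤ c := hc ▸ Finset.sum_nonneg fun u _ => Finset.sum_nonneg fun v _ => hnonneg u v
  have e1 : eW w S B = c := hc.symm
  have e2 : eW w S (univ \ B) = a := by
    have : (univ \ B) \ S = univ \ B := by
      ext x
      have := @hSB x
      simp
      tauto
    rw [ha, eW, this]
  have e3 : eW w S univ = a + c := by
    have h : univ \ S = (univ \ B) ∪ (B \ S) := by
      ext x
      have := @hSB x
      simp
      tauto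
    have hd : Disjoint (univ \ B) (B \ S) := by
      rw [Finset.disjoint_left]
      intro x
      simp
      tauto
    rw [ha, hc, eW, h, ← Finset.sum_add_distrib]
    exact Finset.sum_congr rfl fun u _ => Finset.sum_union hd
  have e4 : eW w (B \ S) univ = b + c := by
    have h : univ \ (B \ S) = (univ \ B) ∪ S := by
      ext x
      have := @hSB x
      simp
      tauto
    have hd : Disjoint (univ \ B) S := by
      rw [Finset.disjoint_left]
      intro x
      have := @hSB x
      simp
      tauto
    rw [hb, hc, Finset.sum_comm (s := S), eW, h, ← Finset.sum_add_distrib]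
    refine Finset.sum_congr rfl fun u _ => ?_
    rw [Finset.sum_union hd]
    congr 1
    exact Finset.sum_congr rfl fun v _ => hsym u v
  have e5 : eW w B univ = a + b := by
    rw [ha, hb, eW, add_comm, Finset.sum_sdiff hSB]
  have p1 : phi w S = (a + c) / vol w S := by rw [phi, e3]
  have p2 : phi w (B \ S) = (b + c) / vol w (B \ S) := by rw [phi, e4]
  have p3 : phi w B = (a + b) / (vol w S + vol w (B \ S)) := by rw [phi, e5, hvB]
  rw [e1, e2, hvB] at h1
  rw [p1, p2]
  rw [p1, p2] at h2
  generalize vol w S = s at *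
  generalize vol w (B \ S) = t at *
  generalize phi w B = p at *
  have hp : p * (s + t) = a + b := by rw [p3]; field_simp
  have hp0 : 0 ≤ p := by rw [p3]; positivity
  clear p3 p1 p2
  rcases le_max_iff.1 h2 with h | h
  · apply min_le_of_right_le
    rw [le_div_iff₀ hs] at h
    rw [div_le_iff₀ ht]
    have hca : c ≤ ε / 3 * a := by
      have : c * (s + t) ≤ (ε / 3 * a) * (s + t) := by
        have : 0 ≤ ε / 3 * a * s := by positivity
        nlinarith
      exact le_of_mul_le_mul_right this (by positivity)
    have h3 : (1 + ε) * (p * s) ≤ a * (1 + ε / 3) := by nlinarith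
    have hq : 0 ≤ p * s := by positivity
    have h4 : p * s * (1 + ε / 3) ≤ (a * (1 - ε / 3)) * (1 + ε / 3) := by
      have h5 := mul_le_mul_of_nonneg_left h3 (by linarith : 0 ≤ 1 - ε / 3)
      have h6 : 0 ≤ p * s * (ε * (1 - ε)) :=
        mul_nonneg hq (mul_nonneg hε0.le (by linarith))
      nlinarith
    have h7 := le_of_mul_le_mul_right h4 (by positivity)
    nlinarith
  · apply min_le_of_left_le
    rw [le_div_iff₀ ht] at h
    rw [div_le_iff₀ hs]
    have hcp : c ≤ ε / 3 * t * p := by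
      have : c * (s + t) ≤ (ε / 3 * t * p) * (s + t) := by
        have : 0 ≤ ε / 3 * t * b := by positivity
        have h8 : (ε / 3 * t * p) * (s + t) = ε / 3 * t * a + ε / 3 * t * b := by
          rw [mul_assoc, hp]; ring
        linarith
      exact le_of_mul_le_mul_right this (by positivity)
    have : 0 ≤ ε * t * p := by positivity
    nlinarith
end

section
/- Let G=(V,E) be a finite weighted graph, 0 < ε ≤ 1, B ⊆ V, and S a nonempty proper subset of B with T = B∖S. Suppose e(S,T) ≤ (ε/3)·e(S,V∖B) and φ(S) ≥ (1+ε)·φ(B). Then φ(T) ≤ φ(B). -/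
open Finset

theorem stmt7 {V : Type*} [Fintype V] [DecidableEq V] (w : V → V → ℝ)
    (hsym : ∀ u v, w u v = w v u) (hnonneg : ∀ u v, 0 ≤ w u v)
    (hdeg : ∀ v, 0 < deg w v)
    (ε : ℝ) (hε0 : 0 < ε) (hε1 : ε ≤ 1)
    (B S : Finset V) (hSB : S ⊆ B) (hSne : S.Nonempty) (hSpr : S ≠ B)
    (h1 : eW w S (B \ S) ≤ ε / 3 * eW w S (Finset.univ \ B))
    (h2 : (1 + ε) * phi w B ≤ phi w S) :
    phi w (B \ S) ≤ phi w B := by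
  have hTne : (B \ S).Nonempty := by
    rw [Finset.sdiff_nonempty]
    exact fun h => hSpr (Finset.Subset.antisymm hSB h)
  have hs : 0 < vol w S := Finset.sum_pos (fun v _ => hdeg v) hSne
  have ht : 0 < vol w (B \ S) := Finset.sum_pos (fun v _ => hdeg v) hTne
  have hvol : vol w B = vol w (B \ S) + vol w S := (Finset.sum_sdiff hSB).symm
  have eS1 : (B \ S) \ S = B \ S := by ext; simp
  have eS2 : (univ \ B) \ S = univ \ B := by
    ext v; have := @hSB v; simp; tauto
  have eU : univ \ S = (B \ S) ∪ (univ \ B) := by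
    ext v; have := @hSB v; simp; tauto
  have eT : univ \ (B \ S) = S ∪ (univ \ B) := by
    ext v; have := @hSB v; simp; tauto
  have d1 : Disjoint (B \ S) (univ \ B) := by
    rw [Finset.disjoint_left]; intro v; simp; tauto
  have d2 : Disjoint S (univ \ B) := by
    rw [Finset.disjoint_left]; intro v hv; simpa using hSB hv
  have hx : eW w S (B \ S) = ∑ u ∈ S, ∑ v ∈ B \ S, w u v := by rw [eW, eS1]
  have hy : eW w S (univ \ B) = ∑ u ∈ S, ∑ v ∈ univ \ B, w u v := by rw [eW, eS2]
  have hSu : eW w S univ = eW w S (B \ S) + eW w S (univ \ B) := by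
    rw [hx, hy, eW, eU, ← Finset.sum_add_distrib]
    exact Finset.sum_congr rfl fun u _ => Finset.sum_union d1
  have hTu : eW w (B \ S) univ
      = eW w S (B \ S) + ∑ u ∈ B \ S, ∑ v ∈ univ \ B, w u v := by
    rw [hx, eW, eT, Finset.sum_comm (s := S), ← Finset.sum_add_distrib]
    refine Finset.sum_congr rfl fun u _ => ?_
    rw [Finset.sum_union d2]
    congr 1
    exact Finset.sum_congr rfl fun v _ => hsym u v
  have hBu : eW w B univ
      = (∑ u ∈ B \ S, ∑ v ∈ univ \ B, w u v) + eW w S (univ \ B) := by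
    rw [hy, eW, Finset.sum_sdiff hSB]
  have hy0 : 0 ≤ eW w S (univ \ B) :=
    Finset.sum_nonneg fun u _ => Finset.sum_nonneg fun v _ => hnonneg u v
  have hφ : phi w B * (vol w (B \ S) + vol w S) = eW w B univ := by
    rw [← hvol, phi, div_mul_cancel₀]
    rw [hvol]; positivity
  have h3 : (1 + ε) * phi w B * vol w S ≤ eW w S univ := by
    rw [phi.eq_def w S, le_div_iff₀ hs] at h2
    exact h2
  rw [phi.eq_def w (B \ S), div_le_iff₀ ht, hTu]
  rw [hBu] at hφ
  rw [hSu] at h3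
  generalize eW w S (B \ S) = x at *
  generalize eW w S (univ \ B) = y at *
  generalize phi w B = p at *
  have key : x + y ≤ (1 + ε) * (y - x) := by nlinarith [mul_nonneg hε0.le hy0]
  have : p * vol w S ≤ y - x := by
    have : (1 + ε) * (p * vol w S) ≤ (1 + ε) * (y - x) := by linarith
    exact le_of_mul_le_mul_left this (by linarith)
  linarith
end

section
/- Let G=(V,E) be a finite weighted graph, 0 < ε ≤ 1, B ⊆ V, and let S be a nonempty subset of B with T = B∖S nonempty and vol(S) ≤ vol(B)/2. If e(S,B)·vol(B) ≥ (ε/3)·vol(T)·e(S,V∖B) and e(T,B)·vol(B) ≥ (ε/3)·vol(S)·e(T,V∖B), then e(S,B)/vol(S) ≥ (ε/7)·max{φ(S), φ(T)}; in particular the conductance of S inside the induced subgraph G[B] is at least (ε/7)·max{φ(S), φ(T)}. -/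
open Finset

theorem eW_split_univ {V : Type*} [Fintype V] [DecidableEq V] (w : V → V → ℝ)
    (B S : Finset V) (hSB : S ⊆ B) :
    eW w S Finset.univ = eW w S B + eW w S (Finset.univ \ B) := by
  unfold eW
  rw [← Finset.sum_add_distrib]
  refine Finset.sum_congr rfl fun u _ => ?_
  rw [← Finset.sum_union]
  · refine Finset.sum_congr ?_ fun _ _ => rfl
    ext v
    have := @hSB v
    simp only [Finset.mem_sdiff, Finset.mem_union, Finset.mem_univ, true_and]
    tauto
  · rw [Finset.disjoint_left]
    intro v
    simp only [Finset.mem_sdiff, Finset.mem_univ, true_and]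
    tauto

theorem eW_compl_in {V : Type*} [DecidableEq V] (w : V → V → ℝ)
    (hsym : ∀ u v, w u v = w v u) (B S : Finset V) (hSB : S ⊆ B) :
    eW w (B \ S) B = eW w S B := by
  unfold eW
  rw [Finset.sdiff_sdiff_eq_self hSB, Finset.sum_comm]
  exact Finset.sum_congr rfl fun u _ => Finset.sum_congr rfl fun v _ => hsym _ _

theorem stmt9 {V : Type*} [Fintype V] [DecidableEq V] (w : V → V → ℝ)
    (hsym : ∀ u v, w u v = w v u) (hnonneg : ∀ u v, 0 ≤ w u v)
    (hdeg : ∀ v, 0 < deg w v)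
    (ε : ℝ) (hε0 : 0 < ε) (hε1 : ε ≤ 1)
    (B S : Finset V) (hSB : S ⊆ B) (hSne : S.Nonempty) (hTne : (B \ S).Nonempty)
    (hvol : vol w S ≤ vol w B / 2)
    (h1 : ε / 3 * vol w (B \ S) * eW w S (Finset.univ \ B) ≤ eW w S B * vol w B)
    (h2 : ε / 3 * vol w S * eW w (B \ S) (Finset.univ \ B) ≤ eW w (B \ S) B * vol w B) :
    ε / 7 * max (phi w S) (phi w (B \ S)) ≤ eW w S B / vol w S ∧
    ε / 7 * max (phi w S) (phi w (B \ S)) * volIn w B S ≤ eW w S B := by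
  have ha : 0 < vol w S := Finset.sum_pos (fun v _ => hdeg v) hSne
  have hb : 0 < vol w (B \ S) := Finset.sum_pos (fun v _ => hdeg v) hTne
  have hB : vol w B = vol w (B \ S) + vol w S := (Finset.sum_sdiff hSB).symm
  have hpos : ∀ X Y : Finset V, 0 ≤ eW w X Y := fun X Y =>
    Finset.sum_nonneg fun u _ => Finset.sum_nonneg fun v _ => hnonneg u v
  have hx := hpos S B
  have hp := hpos S (Finset.univ \ B)
  have hq := hpos (B \ S) (Finset.univ \ B)
  have hin : volIn w B S ≤ vol w S :=
    Finset.sum_le_sum fun v _ => Finset.sum_le_sum_of_subset_of_nonneg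
      (Finset.subset_univ B) fun u _ _ => hnonneg v u
  have main : ε / 7 * max (phi w S) (phi w (B \ S)) ≤ eW w S B / vol w S := by
    rw [mul_max_of_nonneg _ _ (by positivity)]
    unfold phi
    rw [eW_split_univ w B S hSB, eW_split_univ w B (B \ S) Finset.sdiff_subset]
    rw [eW_compl_in w hsym B S hSB] at h2 ⊢
    rw [hB] at h1 h2 hvol
    generalize vol w S = a at *
    generalize vol w (B \ S) = b at *
    generalize eW w S B = x at *
    generalize eW w S (Finset.univ \ B) = p at *
    generalize eW w (B \ S) (Finset.univ \ B) = q at *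
    have hab : a ≤ b := by linarith
    have hxab : x * a ≤ x * b := mul_le_mul_of_nonneg_left hab hx
    have hεx : ε * x ≤ x := by nlinarith
    apply max_le
    · have h3 : ε * p ≤ 6 * x := by
        refine le_of_mul_le_mul_left ?_ hb
        nlinarith
      rw [← mul_div_assoc]
      refine div_le_div_of_nonneg_right ?_ ha.le
      linarith
    · rw [← mul_div_assoc, div_le_div_iff₀ hb ha]
      have h4 : ε * x * a ≤ x * a := mul_le_mul_of_nonneg_right hεx ha.le
      nlinarith
  refine ⟨main, ?_⟩
  have hm : 0 ≤ ε / 7 * max (phi w S) (phi w (B \ S)) :=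
    mul_nonneg (by positivity) (le_max_of_le_left (div_nonneg (hpos _ _) ha.le))
  calc _ ≤ ε / 7 * max (phi w S) (phi w (B \ S)) * vol w S :=
        mul_le_mul_of_nonneg_left hin hm
    _ ≤ eW w S B := (le_div_iff₀ ha).mp main
end
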